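/- Let f : 𝕋^d → ℝ be in the Wiener algebra (absolutely convergent Fourier series) with f(𝕋^d) ⊂ (0,1). Then the composition g = m ∘ f, with m(z) = log((1−z)/z), is again in the Wiener algebra, g is real-valued, and f(k) = (1 + e^{g(k)})^{−1} for all k. -/

import Mathlib

open scoped BigOperators
open Complex Set

section WienerLevy

open UnitAddTorus MeasureTheory

noncomputable local instance wlMS : MeasureSpace UnitAddCircle := ⟨AddCircle.haarAddCircle⟩

local instance wlHaar : Measure.IsAddHaarMeasure (volume : Measure UnitAddCircle) :=
  inferInstanceAs (Measure.IsAddHaarMeasure AddCircle.haarAddCircle)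

local instance wlProb : IsProbabilityMeasure (volume : Measure UnitAddCircle) :=
  inferInstanceAs (IsProbabilityMeasure AddCircle.haarAddCircle)

/-- Wiener-algebra membership, with norm bound `c`; an arbitrary (not necessarily injective)
indexing of frequencies is allowed. -/
def WRep {d : ℕ} (F : C(UnitAddTorus (Fin d), ℂ)) (c : ℝ) : Prop :=
  ∃ (ι : Type) (a : ι → ℂ) (s : ι → (Fin d → ℤ)), Summable (fun i => ‖a i‖) ∧
    ∑' i, ‖a i‖ ≤ c ∧ HasSum (fun i => a i • mFourier (s i)) F

variable {d : ℕ}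

theorem wl_norm_term {ι : Type} (a : ι → ℂ) (s : ι → (Fin d → ℤ)) :
    (fun i => ‖a i • mFourier (s i)‖) = fun i => ‖a i‖ := by
  funext i
  rw [norm_smul, mFourier_norm, mul_one]

theorem WRep.mono {F : C(UnitAddTorus (Fin d), ℂ)} {c c' : ℝ} (h : WRep F c) (hc : c ≤ c') :
    WRep F c' := by
  obtain ⟨ι, a, s, h1, h2, h3⟩ := h
  exact ⟨ι, a, s, h1, h2.trans hc, h3⟩

theorem WRep.norm_le {F : C(UnitAddTorus (Fin d), ℂ)} {c : ℝ} (h : WRep F c) : ‖F‖ ≤ c := by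
  obtain ⟨ι, a, s, h1, h2, h3⟩ := h
  rw [← h3.tsum_eq]
  have h4 : Summable (fun i => ‖a i • mFourier (s i)‖) := by rw [wl_norm_term]; exact h1
  refine (norm_tsum_le_tsum_norm h4).trans ?_
  rw [wl_norm_term]; exact h2

theorem WRep.nonneg {F : C(UnitAddTorus (Fin d), ℂ)} {c : ℝ} (h : WRep F c) : 0 ≤ c :=
  (norm_nonneg F).trans h.norm_le

theorem WRep.sigma {F : ℕ → C(UnitAddTorus (Fin d), ℂ)} {c : ℕ → ℝ} (h : ∀ n, WRep (F n) (c n))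
    (hc : Summable c) : WRep (∑' n, F n) (∑' n, c n) := by
  choose ι a s h1 h2 h3 using h
  have hs : Summable (fun n => ∑' i, ‖a n i‖) :=
    Summable.of_nonneg_of_le (fun n => tsum_nonneg fun i => norm_nonneg _) h2 hc
  have hS : Summable (fun p : (Σ n, ι n) => ‖a p.1 p.2‖) := by
    rw [summable_sigma_of_nonneg (fun _ => norm_nonneg _)]
    exact ⟨h1, hs⟩
  refine ⟨Σ n, ι n, fun p => a p.1 p.2, fun p => s p.1 p.2, hS, ?_, ?_⟩
  · rw [hS.tsum_sigma' h1]
    exact hs.tsum_le_tsum h2 hc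
  · have hT : Summable (fun p : (Σ n, ι n) => a p.1 p.2 • mFourier (s p.1 p.2)) := by
      apply Summable.of_norm
      rw [wl_norm_term (fun p : (Σ n, ι n) => a p.1 p.2) (fun p => s p.1 p.2)]
      exact hS
    have := hT.hasSum.sigma h3
    rw [this.tsum_eq]
    exact hT.hasSum

theorem wl_mul_aux {ι κ : Type} (φ : ι → C(UnitAddTorus (Fin d), ℂ))
    (ψ : κ → C(UnitAddTorus (Fin d), ℂ)) (F G : C(UnitAddTorus (Fin d), ℂ)) (h : HasSum φ F)
    (g : HasSum ψ G) (hT : Summable fun p : ι × κ => φ p.1 * ψ p.2) :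
    HasSum (fun p : ι × κ => φ p.1 * ψ p.2) (F * G) := h.mul g hT

theorem WRep.mul {F G : C(UnitAddTorus (Fin d), ℂ)} {c e : ℝ} (hF : WRep F c) (hG : WRep G e) :
    WRep (F * G) (c * e) := by
  have hc := hF.nonneg
  obtain ⟨ι, a, s, h1, h2, h3⟩ := hF
  obtain ⟨κ, b, t, g1, g2, g3⟩ := hG
  have hS : Summable (fun p : ι × κ => ‖a p.1 * b p.2‖) := h1.mul_norm g1
  refine ⟨ι × κ, fun p => a p.1 * b p.2, fun p => s p.1 + t p.2, hS, ?_, ?_⟩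
  · simp_rw [norm_mul]
    rw [← Summable.tsum_mul_tsum h1 g1 (by simpa [norm_mul] using hS)]
    exact mul_le_mul h2 g2 (tsum_nonneg fun _ => norm_nonneg _) hc
  · have : (fun p : ι × κ => (a p.1 * b p.2) • mFourier (s p.1 + t p.2))
        = fun p : ι × κ => (a p.1 • mFourier (s p.1)) * (b p.2 • mFourier (t p.2)) := by
      funext p
      ext x
      simp only [ContinuousMap.smul_apply, ContinuousMap.mul_apply, mFourier_add, smul_eq_mul]
      ring
    have hT : Summable (fun p : ι × κ => (a p.1 * b p.2) • mFourier (s p.1 + t p.2)) := by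
      apply Summable.of_norm
      rw [wl_norm_term (fun p : ι × κ => a p.1 * b p.2) (fun p => s p.1 + t p.2)]
      exact hS
    rw [this] at hT ⊢
    exact wl_mul_aux (fun i => a i • mFourier (s i)) (fun i => b i • mFourier (t i)) F G h3 g3 hT

theorem WRep.add {F G : C(UnitAddTorus (Fin d), ℂ)} {c e : ℝ} (hF : WRep F c) (hG : WRep G e) :
    WRep (F + G) (c + e) := by
  obtain ⟨ι, a, s, h1, h2, h3⟩ := hF
  obtain ⟨κ, b, t, g1, g2, g3⟩ := hG
  have hn : HasSum (fun p : ι ⊕ κ => ‖Sum.elim a b p‖) (∑' i, ‖a i‖ + ∑' i, ‖b i‖) :=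
    HasSum.sum (by simpa [Function.comp_def] using h1.hasSum)
      (by simpa [Function.comp_def] using g1.hasSum)
  refine ⟨ι ⊕ κ, Sum.elim a b, Sum.elim s t, hn.summable, ?_, ?_⟩
  · rw [hn.tsum_eq]; exact add_le_add h2 g2
  · exact HasSum.sum (by simpa [Function.comp_def] using h3)
      (by simpa [Function.comp_def] using g3)

theorem WRep.monomial (x : Fin d → ℤ) (z : ℂ) : WRep (z • mFourier x) ‖z‖ := by
  refine ⟨Unit, fun _ => z, fun _ => x, (hasSum_fintype _).summable, by simp, ?_⟩
  simp

theorem WRep.smul {F : C(UnitAddTorus (Fin d), ℂ)} {c : ℝ} (hF : WRep F c) (z : ℂ) :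
    WRep (z • F) (‖z‖ * c) := by
  have := (WRep.monomial (0 : Fin d → ℤ) z).mul hF
  rwa [mFourier_zero, smul_mul_assoc, one_mul] at this

theorem WRep.one : WRep (1 : C(UnitAddTorus (Fin d), ℂ)) 1 := by
  have := WRep.monomial (0 : Fin d → ℤ) 1
  rwa [mFourier_zero, one_smul, norm_one] at this

theorem WRep.pow {F : C(UnitAddTorus (Fin d), ℂ)} {c : ℝ} (hF : WRep F c) (n : ℕ) :
    WRep (F ^ n) (c ^ n) := by
  induction n with
  | zero => simpa using WRep.one
  | succ n ih => rw [pow_succ, pow_succ]; exact ih.mul hF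

theorem WRep.zero : WRep (0 : C(UnitAddTorus (Fin d), ℂ)) 0 := by
  have := WRep.monomial (0 : Fin d → ℤ) (0 : ℂ)
  rw [norm_zero] at this
  convert this using 1
  ext t
  simp

theorem WRep.sum {κ : Type*} (S : Finset κ) {F : κ → C(UnitAddTorus (Fin d), ℂ)} {c : κ → ℝ}
    (h : ∀ i ∈ S, WRep (F i) (c i)) : WRep (∑ i ∈ S, F i) (∑ i ∈ S, c i) := by
  classical
  induction S using Finset.induction_on with
  | empty => simpa using WRep.zero
  | insert i S hi ih =>
    rw [Finset.sum_insert hi, Finset.sum_insert hi]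
    exact (h i (Finset.mem_insert_self _ _)).add
      (ih fun j hj => h j (Finset.mem_insert_of_mem hj))

/-- Collapse to the standard indexing. -/
theorem WRep.collapse {F : C(UnitAddTorus (Fin d), ℂ)} {c : ℝ} (hF : WRep F c) :
    ∃ b : (Fin d → ℤ) → ℂ, Summable (fun x => ‖b x‖) ∧ HasSum (fun x => b x • mFourier x) F := by
  obtain ⟨ι, a, s, h1, h2, h3⟩ := hF
  let e := Equiv.sigmaFiberEquiv s
  have h1' : Summable (fun p : (Σ x, {i // s i = x}) => ‖a (e p)‖) :=
    (e.summable_iff (f := fun i => ‖a i‖)).2 h1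
  have h3' : HasSum (fun p : (Σ x, {i // s i = x}) => a (e p) • mFourier (s (e p))) F :=
    (e.hasSum_iff (f := fun i => a i • mFourier (s i))).2 h3
  have hfib := fun x => h1'.sigma_factor x
  refine ⟨fun x => ∑' i : {i // s i = x}, a i, ?_, ?_⟩
  · refine Summable.of_nonneg_of_le (fun _ => norm_nonneg _) (fun x => ?_) h1'.sigma
    exact norm_tsum_le_tsum_norm (hfib x)
  · refine h3'.sigma fun x => ?_
    have : HasSum (fun i : {i // s i = x} => a i) (∑' i : {i // s i = x}, a i) :=
      (Summable.of_norm (hfib x)).hasSum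
    have := this.smul_const (mFourier x)
    convert this using 2 with i
    change a i.1 • mFourier (s i.1) = _
    rw [i.2]

/-- Coefficients of a trigonometric polynomial are bounded by its sup norm. -/
theorem wl_coeff_le (S : Finset (Fin d → ℤ)) (b : (Fin d → ℤ) → ℂ) {x : Fin d → ℤ} (hx : x ∈ S) :
    ‖b x‖ ≤ ‖∑ y ∈ S, b y • (mFourier y : C(UnitAddTorus (Fin d), ℂ))‖ := by
  have h := (orthonormal_mFourier (d := Fin d)).inner_right_sum b hx
  have hL : ∑ y ∈ S, b y • mFourierLp (d := Fin d) 2 y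
      = ContinuousMap.toLp 2 volume ℂ (∑ y ∈ S, b y • (mFourier y : C(UnitAddTorus (Fin d), ℂ))) := by
    rw [map_sum]
    simp only [map_smul]
  rw [← h]
  refine (norm_inner_le_norm _ _).trans ?_
  rw [(orthonormal_mFourier (d := Fin d)).norm_eq_one, one_mul, hL]
  refine (ContinuousLinearMap.le_opNorm _ _).trans ?_
  have := ContinuousMap.toLp_norm_le (α := UnitAddTorus (Fin d)) (E := ℂ) (p := 2)
    (μ := volume) (𝕜 := ℂ)
  have h1 : ‖(ContinuousMap.toLp 2 volume ℂ : C(UnitAddTorus (Fin d), ℂ) →L[ℂ] _)‖ ≤ 1 := by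
    simpa [measureUnivNNReal] using this
  exact mul_le_of_le_one_left (norm_nonneg _) h1

/-- Frequency box. -/
noncomputable def wlBox (d n : ℕ) : Finset (Fin d → ℤ) := Fintype.piFinset fun _ => Finset.Icc (-(n : ℤ)) n

theorem wlBox_card (n : ℕ) : (wlBox d n).card = (2 * n + 1) ^ d := by
  simp only [wlBox, Fintype.card_piFinset, Int.card_Icc, Finset.prod_const, Finset.card_univ,
    Fintype.card_fin]
  congr 1
  omega

/-- Trigonometric polynomials with frequencies in a box. -/
noncomputable def wlPoly (d n : ℕ) : Submodule ℂ C(UnitAddTorus (Fin d), ℂ) :=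
  Submodule.span ℂ (mFourier '' (wlBox d n : Set (Fin d → ℤ)))

theorem wlPoly_mul {m n : ℕ} {p q : C(UnitAddTorus (Fin d), ℂ)} (hp : p ∈ wlPoly d m)
    (hq : q ∈ wlPoly d n) : p * q ∈ wlPoly d (m + n) := by
  have h := Submodule.mul_mem_mul hp hq
  rw [wlPoly, wlPoly, Submodule.span_mul_span] at h
  refine Submodule.span_mono ?_ h
  rintro _ ⟨_, ⟨x, hx, rfl⟩, _, ⟨y, hy, rfl⟩, rfl⟩
  refine ⟨x + y, ?_, ?_⟩
  · simp only [wlBox, Finset.mem_coe, Fintype.mem_piFinset, Finset.mem_Icc, Pi.add_apply] at *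
    intro i
    have := hx i
    have := hy i
    push_cast
    constructor <;> linarith
  · ext t
    simp [mFourier_add]

theorem wlPoly_pow {m : ℕ} {p : C(UnitAddTorus (Fin d), ℂ)} (hp : p ∈ wlPoly d m) (k : ℕ) :
    p ^ k ∈ wlPoly d (k * m) := by
  induction k with
  | zero =>
    refine Submodule.subset_span ⟨0, ?_, ?_⟩
    · simp only [wlBox, Finset.mem_coe, Fintype.mem_piFinset, Finset.mem_Icc, Pi.zero_apply]
      intro i
      omega
    · simp [mFourier_zero]
  | succ k ih => rw [pow_succ, Nat.succ_mul]; exact wlPoly_mul ih hp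

theorem wlPoly_rep {m : ℕ} {p : C(UnitAddTorus (Fin d), ℂ)} (hp : p ∈ wlPoly d m) :
    WRep p ((2 * m + 1) ^ d * ‖p‖) := by
  rw [wlPoly, Submodule.mem_span_image_finset_iff_exists_fun'] at hp
  obtain ⟨b, rfl⟩ := hp
  refine (WRep.sum (F := fun x => b x • mFourier x) (c := fun x => ‖b x‖) _
    fun x _ => WRep.monomial x (b x)).mono ?_
  refine (Finset.sum_le_card_nsmul _ _ _ fun x hx => wl_coeff_le _ b hx).trans ?_
  rw [wlBox_card, nsmul_eq_mul]
  push_cast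
  rfl

/-- Splitting into a trigonometric polynomial plus a small remainder. -/
theorem WRep.split {F : C(UnitAddTorus (Fin d), ℂ)} {c : ℝ} (hF : WRep F c) {δ : ℝ} (hδ : 0 < δ) :
    ∃ (N : ℕ) (p r : C(UnitAddTorus (Fin d), ℂ)), p ∈ wlPoly d N ∧ WRep r δ ∧ F = p + r := by
  obtain ⟨ι, a, s, h1, h2, h3⟩ := hF
  obtain ⟨S, hS⟩ := ((tendsto_order.1 (tendsto_tsum_compl_atTop_zero fun i => ‖a i‖)).2 δ hδ).exists
  have hN : ∃ N : ℕ, ∀ i ∈ S, s i ∈ wlBox d N := by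
    refine ⟨∑ i ∈ S, ∑ j, (s i j).natAbs, fun i hi => ?_⟩
    simp only [wlBox, Fintype.mem_piFinset, Finset.mem_Icc]
    intro j
    have e1 : (s i j).natAbs ≤ ∑ j, (s i j).natAbs :=
      Finset.single_le_sum (f := fun j => (s i j).natAbs) (fun _ _ => Nat.zero_le _)
        (Finset.mem_univ j)
    have e2 : ∑ j, (s i j).natAbs ≤ ∑ i ∈ S, ∑ j, (s i j).natAbs :=
      Finset.single_le_sum (f := fun i => ∑ j, (s i j).natAbs) (fun _ _ => Nat.zero_le _) hi
    omega
  obtain ⟨N, hN⟩ := hN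
  refine ⟨N, ∑ i ∈ S, a i • mFourier (s i),
    ∑' i : {i // i ∉ S}, a i • mFourier (s i), ?_, ?_, ?_⟩
  · exact Submodule.sum_mem _ fun i hi => Submodule.smul_mem _ _
      (Submodule.subset_span ⟨s i, hN i hi, rfl⟩)
  · exact ⟨{i // i ∉ S}, fun i => a i, fun i => s i, h1.subtype _, hS.le,
      (h3.summable.subtype {i | i ∉ S}).hasSum⟩
  · rw [← h3.tsum_eq]
    exact (h3.summable.sum_add_tsum_subtype_compl S).symm

theorem WRep.pow_bound {u : C(UnitAddTorus (Fin d), ℂ)} {c : ℝ} (hu : WRep u c) (h1 : ‖u‖ < 1) :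
    ∃ (N : ℕ) (ρ : ℝ), 0 ≤ ρ ∧ ρ < 1 ∧ ∀ n : ℕ, WRep (u ^ n) ((2 * (n * N : ℕ) + 1) ^ d * ρ ^ n) := by
  have hδ : 0 < (1 - ‖u‖) / 4 := by linarith
  obtain ⟨N, p, r, hp, hr, rfl⟩ := hu.split hδ
  set δ := (1 - ‖p + r‖) / 4 with hδd
  have hpn : ‖p‖ ≤ ‖p + r‖ + δ := by
    have : ‖p‖ ≤ ‖p + r‖ + ‖r‖ := by simpa using norm_sub_le (p + r) r
    linarith [hr.norm_le]
  refine ⟨N, ‖p‖ + δ, by positivity, by linarith, fun n => ?_⟩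
  rw [add_pow p r n, add_pow ‖p‖ δ n, Finset.mul_sum]
  refine WRep.sum _ fun k hk => ?_
  have hk' : k ≤ n := by simpa [Nat.lt_succ_iff] using hk
  have e1 := (wlPoly_rep (wlPoly_pow hp k)).mul (hr.pow (n - k))
  have e2 := e1.smul (n.choose k : ℂ)
  have e3 : ((n.choose k : ℂ)) • (p ^ k * r ^ (n - k)) = p ^ k * r ^ (n - k) * (n.choose k : C(UnitAddTorus (Fin d), ℂ)) := by
    ext t
    simp [mul_comm]
  rw [e3] at e2
  refine e2.mono ?_
  have e4 : ‖p ^ k‖ ≤ ‖p‖ ^ k := norm_pow_le _ _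
  have e5 : ((k * N : ℕ) : ℝ) ≤ (n * N : ℕ) := by
    exact_mod_cast Nat.mul_le_mul_right _ hk'
  rw [Complex.norm_natCast]
  calc (n.choose k : ℝ) * ((2 * (k * N : ℕ) + 1) ^ d * ‖p ^ k‖ * δ ^ (n - k))
      ≤ (n.choose k : ℝ) * ((2 * (n * N : ℕ) + 1) ^ d * ‖p‖ ^ k * δ ^ (n - k)) := by gcongr
    _ = _ := by ring

theorem wl_summable (d N : ℕ) {ρ : ℝ} (h0 : 0 ≤ ρ) (h1 : ρ < 1) :
    Summable fun n : ℕ => ((2 * (n * N : ℕ) + 1 : ℝ)) ^ d * ρ ^ n := by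
  have h : ‖ρ‖ < 1 := by rwa [Real.norm_of_nonneg h0]
  have e : ∀ n : ℕ, ((2 * (n * N : ℕ) + 1 : ℝ)) ^ d * ρ ^ n
      = ∑ m ∈ Finset.range (d + 1), ((2 * N : ℝ) ^ m * (d.choose m)) * ((n : ℝ) ^ m * ρ ^ n) := by
    intro n
    rw [add_pow, Finset.sum_mul]
    refine Finset.sum_congr rfl fun m _ => ?_
    push_cast
    simp only [one_pow, mul_one, mul_pow]
    ring
  simp_rw [e]
  exact summable_sum fun m _ => (summable_pow_mul_geometric_of_norm_lt_one m h).mul_left _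

/-- `-log (1 - u)` is in the Wiener algebra if `u` is and `‖u‖ < 1`. -/
theorem WRep.neg_log {u : C(UnitAddTorus (Fin d), ℂ)} {c : ℝ} (hu : WRep u c) (h1 : ‖u‖ < 1) :
    ∃ (L : C(UnitAddTorus (Fin d), ℂ)) (e : ℝ), WRep L e ∧ ∀ t, L t = -Complex.log (1 - u t) := by
  obtain ⟨N, ρ, h0, hρ, h⟩ := hu.pow_bound h1
  have hs := wl_summable d N h0 hρ
  have hr : ∀ n : ℕ, WRep ((1 / n : ℂ) • u ^ n) ((2 * (n * N : ℕ) + 1) ^ d * ρ ^ n) := by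
    intro n
    refine ((h n).smul _).mono (mul_le_of_le_one_left (h n).nonneg ?_)
    rcases Nat.eq_zero_or_pos n with rfl | hn
    · simp
    · rw [norm_div, norm_one, Complex.norm_natCast]
      exact (div_le_one (by positivity)).2 (by exact_mod_cast hn)
  refine ⟨_, _, WRep.sigma hr hs, fun t => ?_⟩
  have hsum : Summable fun n : ℕ => (1 / n : ℂ) • u ^ n :=
    Summable.of_norm_bounded hs fun n => (hr n).norm_le
  rw [← ContinuousMap.tsum_apply hsum]
  have := (Complex.hasSum_taylorSeries_neg_log ((u.norm_coe_le_norm t).trans_lt h1)).tsum_eq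
  rw [← this]
  refine tsum_congr fun n => ?_
  simp [div_eq_inv_mul]

/-- The covering map `ℝ^d → 𝕋^d`. -/
noncomputable def wlq (k : Fin d → ℝ) : UnitAddTorus (Fin d) :=
  fun i => ((k i / (2 * Real.pi) : ℝ) : UnitAddCircle)

theorem wlq_surj : Function.Surjective (wlq (d := d)) := by
  intro t
  choose y hy using fun i => QuotientAddGroup.mk_surjective (t i)
  refine ⟨fun i => 2 * Real.pi * y i, ?_⟩
  funext i
  rw [← hy i]
  simp only [wlq]
  rw [mul_div_cancel_left₀ _ (by positivity)]

theorem wlq_fourier (x : Fin d → ℤ) (k : Fin d → ℝ) :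
    mFourier x (wlq k) = Complex.exp (Complex.I * ∑ i, (k i : ℂ) * (x i : ℂ)) := by
  simp only [mFourier, ContinuousMap.coe_mk, wlq, fourier_coe_apply]
  rw [← Complex.exp_sum, Finset.mul_sum]
  congr 1
  refine Finset.sum_congr rfl fun i _ => ?_
  have : (Real.pi : ℂ) ≠ 0 := by exact_mod_cast Real.pi_ne_zero
  push_cast
  field_simp

end WienerLevy

/-- Wiener–Lévy theorem applied to `m(z) = log((1-z)/z)`: if `f` lies in the
Wiener algebra of `𝕋^d` (absolutely convergent Fourier series) with
`f(𝕋^d) ⊂ (0,1)`, then `g = m ∘ f` is again in the Wiener algebra, real-valued,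
and `f(k) = (1 + e^{g(k)})⁻¹` for all `k`. -/
theorem stmt16 {d : ℕ} (f : (Fin d → ℝ) → ℝ) (a : (Fin d → ℤ) → ℂ)
    (ha : Summable fun x => ‖a x‖)
    (hf : ∀ k : Fin d → ℝ,
      (f k : ℂ) = ∑' x : Fin d → ℤ, a x * Complex.exp (Complex.I * ∑ i, (k i : ℂ) * (x i : ℂ)))
    (hrange : ∀ k, f k ∈ Ioo (0 : ℝ) 1) :
    ∃ b : (Fin d → ℤ) → ℂ,
      Summable (fun x => ‖b x‖) ∧
      (∀ k : Fin d → ℝ,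
        (Real.log ((1 - f k) / f k) : ℂ)
          = ∑' x : Fin d → ℤ, b x * Complex.exp (Complex.I * ∑ i, (k i : ℂ) * (x i : ℂ))) ∧
      (∀ k : Fin d → ℝ, f k = (1 + Real.exp (Real.log ((1 - f k) / f k)))⁻¹) := by
  have hsum : Summable fun x => a x • (UnitAddTorus.mFourier x : C(UnitAddTorus (Fin d), ℂ)) := by
    apply Summable.of_norm
    rw [wl_norm_term a fun x => x]
    exact ha
  obtain ⟨F, hF⟩ := hsum
  have hFR : WRep F (∑' x, ‖a x‖) := ⟨_, a, fun x => x, ha, le_rfl, hF⟩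
  have eval : ∀ {b : (Fin d → ℤ) → ℂ} {G : C(UnitAddTorus (Fin d), ℂ)},
      HasSum (fun x => b x • (UnitAddTorus.mFourier x : C(UnitAddTorus (Fin d), ℂ))) G →
      ∀ k, G (wlq k)
        = ∑' x : Fin d → ℤ, b x * Complex.exp (Complex.I * ∑ i, (k i : ℂ) * (x i : ℂ)) := by
    intro b G hG k
    rw [← hG.tsum_eq, ← ContinuousMap.tsum_apply hG.summable]
    refine tsum_congr fun x => ?_
    rw [ContinuousMap.smul_apply, wlq_fourier, smul_eq_mul]
  have hFk : ∀ k, F (wlq k) = (f k : ℂ) := fun k => by rw [hf k, eval hF k]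
  have n1 : ‖F‖ < 1 := by
    rw [ContinuousMap.norm_lt_iff _ one_pos]
    intro t
    obtain ⟨k, rfl⟩ := wlq_surj t
    rw [hFk, Complex.norm_real, Real.norm_of_nonneg (hrange k).1.le]
    exact (hrange k).2
  have n2 : ‖1 + (-1 : ℂ) • F‖ < 1 := by
    rw [ContinuousMap.norm_lt_iff _ one_pos]
    intro t
    obtain ⟨k, rfl⟩ := wlq_surj t
    have : (1 + (-1 : ℂ) • F) (wlq k) = ((1 - f k : ℝ) : ℂ) := by
      simp [hFk, sub_eq_add_neg]
    rw [this, Complex.norm_real, Real.norm_of_nonneg (by linarith [(hrange k).2])]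
    linarith [(hrange k).1]
  obtain ⟨L1, e1, r1, hL1⟩ := hFR.neg_log n1
  obtain ⟨L2, e2, r2, hL2⟩ := (WRep.one.add (hFR.smul (-1))).neg_log n2
  obtain ⟨b, hb, hbs⟩ := (r2.add (r1.smul (-1))).collapse
  refine ⟨b, hb, fun k => ?_, fun k => ?_⟩
  · rw [← eval hbs k]
    obtain ⟨p0, p1⟩ := hrange k
    rw [Real.log_div (by linarith) (by linarith), Complex.ofReal_sub,
      Complex.ofReal_log (by linarith), Complex.ofReal_log (by linarith)]
    simp only [ContinuousMap.add_apply, ContinuousMap.smul_apply, hL1, hL2, hFk,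
      ContinuousMap.one_apply, smul_eq_mul]
    push_cast
    rw [show (1 : ℂ) - (1 + -1 * (f k : ℂ)) = f k by ring]
    ring
  · obtain ⟨p0, p1⟩ := hrange k
    rw [Real.exp_log (div_pos (by linarith) p0)]
    field_simp
    ring
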